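/- arXiv:2303.05395 — 2 statements merged into one kernel-verified Lean document; each statement's English description precedes it below -/
import Mathlib

section
/- For all integers m ≥ n ≥ 9, the product P(m,n) = ∏_{i=1}^{n}(m+i) of n consecutive integers each strictly greater than n is divisible by at least three distinct primes strictly greater than n. -/
/-- `P m n = ∏_{i=1}^n (m+i)`. -/
def P (m n : ℕ) : ℕ := ∏ i ∈ Finset.Icc 1 n, (m + i)

/-!
Write `P m n = n ! * (m + n).choose n`. If at most two primes `p > n` divide the binomial
coefficient, then the latter is small, because each prime power in its factorization is at most
`N = m + n`: it is at most `N ^ (π n + 2)`, and also at most `N ^ (π √N + 2) * 4 ^ M`, where `4 ^ M`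
bounds the product of the primes between `√N` and `n` that divide it. The first bound contradicts
`m ^ n ≤ P m n` when `m` is a large multiple of `n`. The second contradicts exponential lower bounds
for the binomial coefficient when `m < 16 * n`; here `M` can be taken about `N / 3` when
`N < 3 * n`, since no odd prime `p ≤ n` with `N < 3 * p` divides the binomial coefficient.

Both arguments need `n` large. Below `2048` the first one still works for `m ≥ 4 * n` (for
`m ≥ 10 * n` if `n < 21`) with exact values of `π`, and for smaller `m` the primes can be exhibited,
usually as three primes among `m + 1, …, m + n`.
-/

section LargePrimeFactors

open Finset
open scoped Nat Nat.Prime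

/-- The primes `p > k` dividing the binomial coefficient `N.choose k`. For `N = m + n` and `k = n`
these are the primes `p > n` dividing `P m n`, since the remaining factor `n!` has no such prime. -/
def largePrimeFactors (N k : ℕ) : Finset ℕ := {p ∈ (N.choose k).primeFactors | k < p}

lemma P_eq_factorial_mul_choose (m n : ℕ) : P m n = n ! * (m + n).choose n := by
  rw [← Nat.ascFactorial_eq_factorial_mul_choose, Nat.ascFactorial_eq_prod_range, P,
    ← Ico_add_one_right_eq_Icc, prod_Ico_eq_prod_range]
  exact prod_congr rfl fun i _ ↦ (add_assoc m 1 i).symm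

lemma filter_primeFactors_P (m n : ℕ) :
    (P m n).primeFactors.filter (fun p ↦ n < p) = largePrimeFactors (m + n) n := by
  rw [largePrimeFactors, P_eq_factorial_mul_choose,
    Nat.primeFactors_mul n.factorial_ne_zero (Nat.choose_pos (by omega)).ne', filter_union,
    union_eq_right, filter_eq_empty_iff.2]
  · exact empty_subset _
  · intro p hp
    exact ((Nat.prime_of_mem_primeFactors hp).dvd_factorial.1
      (Nat.dvd_of_mem_primeFactors hp)).not_gt

lemma prime_dvd_choose_iff_mod_lt {p N k : ℕ} (hp : p.Prime) (hkp : k < p) :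
    p ∣ N.choose k ↔ N % p < k := by
  have : Fact p.Prime := ⟨hp⟩
  have lucas : N.choose k ≡ (N % p).choose k [MOD p] := by
    simpa [Nat.mod_eq_of_lt hkp, Nat.div_eq_of_lt hkp] using
      Choose.choose_modEq_choose_mod_mul_choose_div_nat (n := N) (k := k) (p := p)
  rw [lucas.dvd_iff dvd_rfl]
  refine ⟨fun hdvd ↦ ?_, fun hlt ↦ by simp [Nat.choose_eq_zero_of_lt hlt]⟩
  by_contra! hle
  have hpos : ((N % p).choose k).factorization p ≠ 0 :=
    (hp.factorization_pos_of_dvd (Nat.choose_pos hle).ne' hdvd).ne'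
  exact hpos (Nat.factorization_choose_eq_zero_of_lt (Nat.mod_lt N hp.pos))

lemma mem_largePrimeFactors {p N k : ℕ} (hkN : k ≤ N) :
    p ∈ largePrimeFactors N k ↔ p.Prime ∧ k < p ∧ N % p < k := by
  simp only [largePrimeFactors, mem_filter, Nat.mem_primeFactors, ne_eq, (Nat.choose_pos hkN).ne',
    not_false_eq_true, and_true, and_assoc]
  refine and_congr_right fun hp ↦ ?_
  rw [and_comm]
  exact and_congr_right (prime_dvd_choose_iff_mod_lt hp)

lemma mem_largePrimeFactors_of_lt_add {p N k : ℕ} (hp : p.Prime) (hkp : k < p) (hpN : p ≤ N)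
    (hN : N < p + k) : p ∈ largePrimeFactors N k := by
  rw [mem_largePrimeFactors (by omega), Nat.mod_eq_sub_mod hpN, Nat.mod_eq_of_lt (by omega)]
  exact ⟨hp, hkp, by omega⟩

/-! ### Upper bounds for binomial coefficients -/

/-- A prime power in the factorization of `N.choose k` is at most `N`, and it is at most its prime
when that prime exceeds `√N`. -/
lemma choose_le_pow_card_mul_prod {N k : ℕ} (hN : 0 < N) {s t : Finset ℕ} (ht : ∀ p ∈ t, 0 < p)
    (hst : ∀ p ∈ (N.choose k).primeFactors, p ∉ s → p ∈ t ∧ N < p ^ 2) :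
    N.choose k ≤ N ^ #s * ∏ p ∈ t, p := by
  rcases lt_or_ge N k with hNk | hkN
  · simp [Nat.choose_eq_zero_of_lt hNk]
  set e := (N.choose k).factorization
  have hs : ∏ p ∈ (N.choose k).primeFactors with p ∈ s, p ^ e p ≤ N ^ #s :=
    (prod_le_pow_card _ _ _ fun p _ ↦ Nat.pow_factorization_choose_le hN).trans
      (Nat.pow_le_pow_right hN (card_le_card fun p hp ↦ (mem_filter.1 hp).2))
  have ht' : ∏ p ∈ (N.choose k).primeFactors with p ∉ s, p ^ e p ≤ ∏ p ∈ t, p := by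
    have hmem : ∀ p ∈ (N.choose k).primeFactors.filter (· ∉ s), p ∈ t ∧ N < p ^ 2 := fun p hp ↦
      hst p (mem_filter.1 hp).1 (mem_filter.1 hp).2
    calc _ ≤ ∏ p ∈ (N.choose k).primeFactors with p ∉ s, p := prod_le_prod' fun p hp ↦
          (Nat.pow_le_pow_right (ht p (hmem p hp).1)
            (Nat.factorization_choose_le_one (hmem p hp).2)).trans_eq (pow_one p)
      _ ≤ _ := prod_le_prod_of_subset_of_one_le' (fun p hp ↦ (hmem p hp).1) fun p hp _ ↦ ht p hp
  calc N.choose k = ∏ p ∈ (N.choose k).primeFactors, p ^ e p :=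
        (Nat.prod_factorization_pow_eq_self (Nat.choose_pos hkN).ne').symm
    _ = _ := (prod_filter_mul_prod_filter_not _ (· ∈ s) _).symm
    _ ≤ _ := Nat.mul_le_mul hs ht'

lemma choose_le_pow_primeCounting_add_card {N k : ℕ} (hN : 0 < N) :
    N.choose k ≤ N ^ (π k + #(largePrimeFactors N k)) := by
  refine (choose_le_pow_card_mul_prod (s := k.primesLE ∪ largePrimeFactors N k) (t := ∅) hN
    (by simp) fun p hp hps ↦ absurd ?_ hps).trans ?_
  · rw [mem_union, Nat.mem_primesLE, largePrimeFactors, mem_filter]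
    rcases le_or_gt p k with hpk | hpk
    · exact .inl ⟨hpk, Nat.prime_of_mem_primeFactors hp⟩
    · exact .inr ⟨hp, hpk⟩
  · rw [prod_empty, mul_one, ← Nat.primesLE_card_eq_primeCounting]
    exact Nat.pow_le_pow_right hN (card_union_le _ _)

lemma choose_le_pow_mul_four_pow {N k M : ℕ} (hN : 0 < N)
    (hM : ∀ p ∈ (N.choose k).primeFactors, p ≤ k → N < p ^ 2 → p ≤ M) :
    N.choose k ≤ N ^ (π N.sqrt + #(largePrimeFactors N k)) * 4 ^ M := by
  refine (choose_le_pow_card_mul_prod (s := N.sqrt.primesLE ∪ largePrimeFactors N k)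
    (t := M.primesLE) hN (fun p hp ↦ (Nat.prime_of_mem_primesLE hp).pos) fun p hp hps ↦ ?_).trans ?_
  · have hprime := Nat.prime_of_mem_primeFactors hp
    simp only [mem_union, Nat.mem_primesLE, largePrimeFactors, mem_filter, hp, hprime, and_true,
      true_and, not_or, not_le, not_lt, Nat.sqrt_lt'] at hps
    exact ⟨Nat.mem_primesLE.2 ⟨hM p hp hps.2 hps.1, hprime⟩, hps.1⟩
  · rw [← primorial_eq_prod_primesLE, ← Nat.primesLE_card_eq_primeCounting]
    exact Nat.mul_le_mul (Nat.pow_le_pow_right hN (card_union_le _ _)) (primorial_le_four_pow M)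

/-! ### The range `K * n ≤ m` -/

lemma pow_mul_add_pow_le {x y a n : ℕ} (c : ℕ) (hxy : x ≤ y) (han : a ≤ n) :
    x ^ n * (y + c) ^ a ≤ y ^ n * (x + c) ^ a := by
  obtain ⟨b, rfl⟩ := Nat.exists_eq_add_of_le han
  calc x ^ (a + b) * (y + c) ^ a = (x * (y + c)) ^ a * x ^ b := by rw [mul_pow, pow_add]; ring
    _ ≤ (y * (x + c)) ^ a * y ^ b :=
      Nat.mul_le_mul (Nat.pow_le_pow_left (by nlinarith) a) (Nat.pow_le_pow_left hxy b)
    _ = y ^ (a + b) * (x + c) ^ a := by rw [mul_pow, pow_add]; ring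

lemma pow_le_add_pow_mul_factorial {m n a x : ℕ} (hx : x ≤ m) (han : a ≤ n)
    (ha : π n + #(largePrimeFactors (m + n) n) ≤ a) : x ^ n ≤ (x + n) ^ a * n ! := by
  rcases Nat.eq_zero_or_pos (m + n) with h0 | hpos
  · obtain rfl : n = 0 := by omega
    simp_all
  have hm : m ^ n ≤ n ! * (m + n) ^ a :=
    calc m ^ n ≤ (m + 1) ^ n := Nat.pow_le_pow_left m.le_succ n
      _ ≤ (m + 1).ascFactorial n := Nat.pow_succ_le_ascFactorial _ _
      _ = n ! * (m + n).choose n := Nat.ascFactorial_eq_factorial_mul_choose _ _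
      _ ≤ n ! * (m + n) ^ a := Nat.mul_le_mul_left _
        ((choose_le_pow_primeCounting_add_card hpos).trans (Nat.pow_le_pow_right hpos ha))
  refine Nat.le_of_mul_le_mul_right ?_ (Nat.pow_pos (n := a) hpos)
  calc x ^ n * (m + n) ^ a ≤ m ^ n * (x + n) ^ a := pow_mul_add_pow_le n hx han
    _ ≤ n ! * (m + n) ^ a * (x + n) ^ a := Nat.mul_le_mul_right _ hm
    _ = (x + n) ^ a * n ! * (m + n) ^ a := by ring

lemma add_pow_mul_factorial_lt_pow_succ {K n a : ℕ} (han : a ≤ n)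
    (h : (K * n + n) ^ a * n ! < (K * n) ^ n) :
    (K * (n + 1) + (n + 1)) ^ a * (n + 1)! < (K * (n + 1)) ^ (n + 1) := by
  have hK : 0 < K := Nat.pos_of_ne_zero (by rintro rfl; cases n <;> simp_all)
  refine Nat.lt_of_mul_lt_mul_right (a := n ^ a) ?_
  calc (K * (n + 1) + (n + 1)) ^ a * (n + 1)! * n ^ a
      = (n + 1) ^ (a + 1) * ((K * n + n) ^ a * n !) := by
        rw [Nat.factorial_succ, ← add_one_mul, ← add_one_mul, mul_pow, mul_pow]; ring
    _ < (n + 1) ^ (a + 1) * (K * n) ^ n := by gcongr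
    _ = K ^ n * (n + 1) * (n ^ n * (n + 1) ^ a) := by ring
    _ ≤ K ^ (n + 1) * (n + 1) * ((n + 1) ^ n * n ^ a) :=
        Nat.mul_le_mul (Nat.mul_le_mul_right _ (Nat.pow_le_pow_right hK n.le_succ))
          (by simpa using pow_mul_add_pow_le 0 n.le_succ han)
    _ = (K * (n + 1)) ^ (n + 1) * n ^ a := by rw [mul_pow]; ring

lemma add_pow_mul_factorial_lt_pow_of_le {K s n a : ℕ} (has : a ≤ s) (hsn : s ≤ n)
    (h : (K * s + s) ^ a * s ! < (K * s) ^ s) : (K * n + n) ^ a * n ! < (K * n) ^ n := by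
  induction n, hsn using Nat.le_induction with
  | base => exact h
  | succ n hsn ih => exact add_pow_mul_factorial_lt_pow_succ (has.trans hsn) ih

lemma lt_card_largePrimeFactors_of_pow_lt {K r m n a : ℕ} (hm : K * n ≤ m) (han : a ≤ n)
    (ha : π n + r ≤ a) (h : (K * n + n) ^ a * n ! < (K * n) ^ n) :
    r < #(largePrimeFactors (m + n) n) := by
  by_contra! hcard
  exact (pow_le_add_pow_mul_factorial hm han (by omega)).not_gt h

lemma exists_le_lt_succ {q : ℕ → ℕ} {L x : ℕ} (h0 : q 0 ≤ x) (hL : x < q L) :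
    ∃ i < L, q i ≤ x ∧ x < q (i + 1) := by
  induction L with
  | zero => omega
  | succ L ih =>
    rcases lt_or_ge x (q L) with hx | hx
    · obtain ⟨i, hi, hqi⟩ := ih hx
      exact ⟨i, by omega, hqi⟩
    · exact ⟨L, L.lt_succ_self, hx, hL⟩

/-- On a block `q i ≤ n < q (i + 1)` the exponent `π' (q (i + 1)) + r` bounds `π n + r`, so a single
inequality at `n = q i` settles the whole block. -/
lemma lt_card_largePrimeFactors_of_blocks {K L r m n : ℕ} (q : ℕ → ℕ)
    (hq : ∀ i < L, π' (q (i + 1)) + r ≤ q i ∧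
      (K * q i + q i) ^ (π' (q (i + 1)) + r) * (q i)! < (K * q i) ^ q i)
    (h0 : q 0 ≤ n) (hL : n < q L) (hm : K * n ≤ m) : r < #(largePrimeFactors (m + n) n) := by
  obtain ⟨i, hiL, hi, hi'⟩ := exists_le_lt_succ h0 hL
  obtain ⟨hle, hlt⟩ := hq i hiL
  exact lt_card_largePrimeFactors_of_pow_lt hm (hle.trans hi)
    (Nat.add_le_add_right (Nat.monotone_primeCounting' hi') r)
    (add_pow_mul_factorial_lt_pow_of_le hle hi hlt)

/-! ### Exponential growth of binomial coefficients -/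

lemma three_mul_le_of_prime_dvd_choose {p N n : ℕ} (hp : p.Prime) (hdvd : p ∣ N.choose n)
    (hp2 : p ≠ 2) (hpn : p ≤ n) (hnN : 2 * n ≤ N) : 3 * p ≤ N := by
  by_contra! hlt
  exact (hp.factorization_pos_of_dvd (Nat.choose_pos (by omega)).ne' hdvd).ne'
    (Nat.factorization_choose_of_lt_three_mul hp2 hpn (by omega) hlt)

lemma three_mul_choose_le_two_mul_choose_succ {N n : ℕ} (hn : n ≤ N) (hN : N < 3 * n) :
    3 * N.choose n ≤ 2 * (N + 1).choose n := by
  refine Nat.le_of_mul_le_mul_right (c := N + 1 - n) ?_ (by omega)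
  calc 3 * N.choose n * (N + 1 - n) = N.choose n * (3 * (N + 1 - n)) := by ring
    _ ≤ N.choose n * (2 * (N + 1)) := Nat.mul_le_mul_left _ (by omega)
    _ = 2 * (N.choose n * (N + 1)) := by ring
    _ = 2 * (N + 1).choose n * (N + 1 - n) := by rw [Nat.choose_mul_succ_eq, mul_assoc]

lemma four_pow_mul_three_pow_le_choose {n r : ℕ} (hn : 0 < n) (hr : r ≤ n) :
    4 ^ n * 3 ^ r ≤ 2 * n * 2 ^ r * (2 * n + r).choose n := by
  induction r with
  | zero => simpa [Nat.centralBinom] using Nat.four_pow_le_two_mul_self_mul_centralBinom n hn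
  | succ r ih =>
    calc 4 ^ n * 3 ^ (r + 1) = 3 * (4 ^ n * 3 ^ r) := by ring
      _ ≤ 3 * (2 * n * 2 ^ r * (2 * n + r).choose n) := Nat.mul_le_mul_left _ (ih (by omega))
      _ = 2 * n * 2 ^ r * (3 * (2 * n + r).choose n) := by ring
      _ ≤ 2 * n * 2 ^ r * (2 * (2 * n + r + 1).choose n) := Nat.mul_le_mul_left _
        (three_mul_choose_le_two_mul_choose_succ (by omega) (by omega))
      _ = 2 * n * 2 ^ (r + 1) * (2 * n + (r + 1)).choose n := by rw [add_assoc]; ring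

lemma three_pow_le_two_pow_mul_of_le {n r M X : ℕ} (hr : r ≤ n) (hM : 3 * M ≤ 2 * n + r)
    (h : 4 ^ n * 3 ^ r ≤ X * 2 ^ r * 4 ^ M) : 3 ^ n ≤ 2 ^ n * X := by
  obtain ⟨d, rfl⟩ := Nat.exists_eq_add_of_le hr
  -- Since `3 ^ 3 ≤ 2 ^ 5`, the worst case is `d = 0`.
  have hd : (3 ^ 3) ^ d ≤ (2 ^ 5) ^ d := Nat.pow_le_pow_left (by norm_num) d
  rw [show 4 = 2 ^ 2 by rfl] at h
  have hcube : ((2 ^ 2) ^ (r + d) * 3 ^ r) ^ 3 ≤ (X * 2 ^ r) ^ 3 * (2 ^ 2) ^ (2 * (r + d) + r) :=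
    calc _ ≤ (X * 2 ^ r * (2 ^ 2) ^ M) ^ 3 := Nat.pow_le_pow_left h 3
      _ = (X * 2 ^ r) ^ 3 * (2 ^ 2) ^ (3 * M) := by rw [mul_pow, ← pow_mul _ M, mul_comm M]
      _ ≤ _ := Nat.mul_le_mul_left _ (Nat.pow_le_pow_right (by norm_num) hM)
  rw [← Nat.pow_le_pow_iff_left (n := 3) (by norm_num)]
  refine Nat.le_of_mul_le_mul_right (c := 2 ^ (6 * (r + d))) ?_ (by positivity)
  calc (3 ^ (r + d)) ^ 3 * 2 ^ (6 * (r + d)) = (3 ^ 3) ^ d * ((2 ^ 2) ^ (r + d) * 3 ^ r) ^ 3 := by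
        simp only [← pow_mul, mul_pow, pow_add]; ring
    _ ≤ (2 ^ 5) ^ d * ((X * 2 ^ r) ^ 3 * (2 ^ 2) ^ (2 * (r + d) + r)) := Nat.mul_le_mul hd hcube
    _ = (2 ^ (r + d) * X) ^ 3 * 2 ^ (6 * (r + d)) := by
        simp only [← pow_mul, mul_pow, pow_add]; ring

lemma three_pow_le_of_two_mul_le {N n : ℕ} (hn : 2 ≤ n) (hN : 2 * n ≤ N) :
    3 ^ n ≤ 2 ^ n * (2 * n * N ^ (π N.sqrt + #(largePrimeFactors N n))) := by
  set r := min (N - 2 * n) n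
  set E := π N.sqrt + #(largePrimeFactors N n)
  have hchoose : N.choose n ≤ N ^ E * 4 ^ ((2 * n + r) / 3) := by
    refine choose_le_pow_mul_four_pow (by omega) fun p hp hpn hNp ↦ ?_
    have hp2 : p ≠ 2 := by rintro rfl; omega
    have := three_mul_le_of_prime_dvd_choose (Nat.prime_of_mem_primeFactors hp)
      (Nat.dvd_of_mem_primeFactors hp) hp2 hpn hN
    omega
  refine three_pow_le_two_pow_mul_of_le (min_le_right _ _) (Nat.mul_div_le (2 * n + r) 3) ?_
  calc 4 ^ n * 3 ^ r ≤ 2 * n * 2 ^ r * (2 * n + r).choose n :=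
        four_pow_mul_three_pow_le_choose (by omega) (min_le_right _ _)
    _ ≤ 2 * n * 2 ^ r * (N ^ E * 4 ^ ((2 * n + r) / 3)) :=
      Nat.mul_le_mul_left _ ((Nat.choose_le_choose n (by omega)).trans hchoose)
    _ = 2 * n * N ^ E * 2 ^ r * 4 ^ ((2 * n + r) / 3) := by ring

/-! ### The range `n < 2048` -/

lemma prime_iff_coprime_factorial_sqrt {p : ℕ} :
    p.Prime ↔ 2 ≤ p ∧ p.Coprime (p.sqrt)! := by
  rw [Nat.prime_def_le_sqrt]
  refine and_congr_right fun _ ↦ ⟨fun h ↦ ?_, fun h d hd hds hdp ↦ ?_⟩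
  · refine Nat.Coprime.symm (Nat.coprime_of_dvd' fun q hq hqf hqp ↦ ?_)
    exact absurd hqp (h q hq.two_le (hq.dvd_factorial.1 hqf))
  · have := Nat.dvd_gcd hdp (Nat.dvd_factorial (by omega) hds)
    rw [h, Nat.dvd_one] at this
    omega

lemma primeCounting'_eq_count_coprime_factorial_sqrt (n : ℕ) :
    π' n = Nat.count (fun p ↦ 2 ≤ p ∧ p.Coprime (p.sqrt)!) n := by
  simp only [Nat.primeCounting', Nat.count_eq_card_filter_range, prime_iff_coprime_factorial_sqrt]

/-- Breakpoints cutting `[9, 21)` into blocks for `lt_card_largePrimeFactors_of_blocks` with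
`K = 10`. -/
def tinyBreakpoints : List ℕ := [9, 11, 13, 17, 21]

/-- Breakpoints cutting `[21, 2048)` into blocks for `lt_card_largePrimeFactors_of_blocks` with
`K = 4`. -/
def smallBreakpoints : List ℕ := [21, 23, 29, 37, 47, 67, 97, 149, 239, 397, 677, 1201, 2048]

/-- Breakpoints cutting `[21, 8192)` into blocks `[x, y)` such that there are three primes in
`[y, x + n]` whenever `21 ≤ n` and `x < 4 * n`. -/
def primeTripleBreakpoints : List ℕ :=
  [21, 31, 41, 53, 67, 73, 79, 83, 97, 107, 113, 131, 151, 173, 197, 233, 277, 331, 397, 479, 587,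
    719, 881, 1091, 1321, 1621, 2011, 2473, 3079, 3823, 4733, 5881, 7333, 8192]

lemma two_lt_card_largePrimeFactors_of_lt_21_of_ten_mul_le {m n : ℕ} (hn : 9 ≤ n) (hn' : n < 21)
    (hm : 10 * n ≤ m) : 2 < #(largePrimeFactors (m + n) n) := by
  refine lt_card_largePrimeFactors_of_blocks (tinyBreakpoints.getD · 0) (L := 4) ?_ hn hn' hm
  simp only [primeCounting'_eq_count_coprime_factorial_sqrt]
  decide +kernel

lemma two_lt_card_largePrimeFactors_of_lt_2048_of_four_mul_le {m n : ℕ} (hn : 21 ≤ n)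
    (hn' : n < 2048) (hm : 4 * n ≤ m) : 2 < #(largePrimeFactors (m + n) n) := by
  refine lt_card_largePrimeFactors_of_blocks (smallBreakpoints.getD · 0) (L := 12) ?_ hn hn' hm
  simp only [primeCounting'_eq_count_coprime_factorial_sqrt]
  decide +kernel

lemma two_lt_card_largePrimeFactors_of_lt_21_of_lt_ten_mul {m n : ℕ} (hn : 9 ≤ n) (hn' : n < 21)
    (hnm : n ≤ m) (hm : m < 10 * n) : 2 < #(largePrimeFactors (m + n) n) := by
  have search : ∀ k ∈ Ico 9 21, ∀ N ∈ Ico (2 * k) (11 * k),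
      2 < #{p ∈ Nat.primesLE 211 | k < p ∧ N % p < k} := by
    decide +kernel
  refine (search n (mem_Ico.2 ⟨hn, hn'⟩) (m + n) (mem_Ico.2 ⟨by omega, by omega⟩)).trans_le
    (card_le_card fun p hp ↦ ?_)
  rw [mem_filter] at hp
  exact (mem_largePrimeFactors (by omega)).2 ⟨Nat.prime_of_mem_primesLE hp.1, hp.2⟩

lemma two_lt_card_largePrimeFactors_of_lt_2048_of_lt_four_mul {m n : ℕ} (hn : 21 ≤ n)
    (hn' : n < 2048) (hnm : n ≤ m) (hm : m < 4 * n) : 2 < #(largePrimeFactors (m + n) n) := by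
  set q : ℕ → ℕ := (primeTripleBreakpoints.getD · 0)
  have search : ∀ i < 33, 2 < #{p ∈ Icc (q (i + 1)) (q i + max 21 (q i / 4 + 1)) |
      2 ≤ p ∧ p.Coprime (p.sqrt)!} := by
    decide +kernel
  obtain ⟨i, hi, hqi, hqi'⟩ := exists_le_lt_succ (q := q) (L := 33) (x := m)
    (show 21 ≤ m by omega) (show m < 8192 by omega)
  refine (search i hi).trans_le (card_le_card fun p hp ↦ ?_)
  rw [mem_filter, mem_Icc, ← prime_iff_coprime_factorial_sqrt] at hp
  exact mem_largePrimeFactors_of_lt_add hp.2 (by omega) (by omega) (by omega)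

/-! ### The range `2048 ≤ n` -/

lemma fifteen_mul_primeCounting_le {n : ℕ} (hn : 30 ≤ n) : 15 * π n ≤ 4 * n + 150 := by
  have hsieve := Nat.primeCounting_add_le (a := 30) (k := 30) (by norm_num) le_rfl (n - 30)
  rw [Nat.add_sub_cancel' hn, show π 30 = 10 by decide +kernel,
    show Nat.totient 30 = 8 by decide +kernel] at hsieve
  omega

lemma primeCounting_mul_log_le {n : ℕ} (hn : 2 ≤ n) :
    π n * Real.log n ≤ Real.log 16 * n + √n * Real.log n := by
  have hn' : (1 : ℝ) < n := by exact_mod_cast hn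
  have hlog : 0 < Real.log n := Real.log_pos hn'
  have hpi := Chebyshev.pi_le_log4_mul_div hn'
  rw [Nat.floor_natCast, Real.log_sqrt n.cast_nonneg] at hpi
  calc π n * Real.log n ≤ (Real.log 4 * n / (Real.log n / 2) + √n) * Real.log n := by gcongr
    _ = 2 * Real.log 4 * n + √n * Real.log n := by field_simp
    _ = Real.log 16 * n + √n * Real.log n := by
      rw [show (16 : ℝ) = 4 ^ 2 by norm_num, Real.log_pow, Nat.cast_ofNat]

lemma log_factorial_le {n : ℕ} (hn : 0 < n) :
    Real.log n ! ≤ n * Real.log n - n + Real.log n / 2 + 1 := by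
  have hanti := Stirling.log_stirlingSeq'_antitone (Nat.zero_le (n - 1))
  simp only [Function.comp, Nat.succ_eq_add_one, Nat.sub_add_cancel hn, zero_add] at hanti
  have hn' : (0 : ℝ) < n := by exact_mod_cast hn
  rw [Stirling.stirlingSeq_one, Stirling.log_stirlingSeq_formula,
    Real.log_div (Real.exp_pos 1).ne' (by positivity), Real.log_exp, Real.log_sqrt (by norm_num),
    Real.log_mul (by norm_num) hn'.ne', Real.log_div hn'.ne' (Real.exp_pos 1).ne',
    Real.log_exp] at hanti
  linarith

lemma log_seventeen_lt : Real.log 17 < 2.836 := by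
  have h : Real.log (17 / 16) ≤ 17 / 16 - 1 := Real.log_le_sub_one_of_pos (by norm_num)
  rw [Real.log_div (by norm_num) (by norm_num), show (16 : ℝ) = 2 ^ 4 by norm_num,
    Real.log_pow] at h
  push_cast at h
  linarith [Real.log_two_lt_d9]

/-- The tangent to `log` at `64`, applied to `√x`. -/
lemma log_le_sqrt_div_add {x : ℝ} (hx : 0 < x) : Real.log x ≤ √x / 32 + 6.32 := by
  have h := Real.log_le_sub_one_of_pos (show 0 < √x / 64 by positivity)
  rw [Real.log_div (by positivity) (by norm_num), Real.log_sqrt hx.le,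
    show (64 : ℝ) = 2 ^ 6 by norm_num, Real.log_pow] at h
  push_cast at h
  linarith [Real.log_two_lt_d9]

/-- The ratio `16 = 4 ^ 2` makes `n * log 16` cancel against the main term of Chebyshev's bound for
`π n`. -/
lemma le_sqrt_mul_log_add_of_pow_le {n r : ℕ} (hn : 2 ≤ n)
    (h : (16 * n) ^ n ≤ (16 * n + n) ^ (π n + r) * n !) :
    (n : ℝ) ≤ √n * Real.log n + (r + 1 / 2) * Real.log n + (π n + r) * Real.log 17 + 1 := by
  have hn0 : (0 : ℝ) < n := by exact_mod_cast (show 0 < n by omega)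
  have hlog : n * (Real.log 16 + Real.log n) ≤
      (π n + r) * (Real.log 17 + Real.log n) + Real.log n ! := by
    have h' : (16 * n : ℝ) ^ n ≤ (17 * n) ^ (π n + r) * n ! := by
      rw [← add_one_mul] at h
      exact_mod_cast h
    have := Real.log_le_log (by positivity) h'
    rwa [Real.log_mul (by positivity) (by positivity), Real.log_pow, Real.log_pow,
      Real.log_mul (by norm_num) hn0.ne', Real.log_mul (by norm_num) hn0.ne', Nat.cast_add] at this
  linarith [primeCounting_mul_log_le hn, log_factorial_le (n := n) (by omega)]

lemma two_lt_card_largePrimeFactors_of_sixteen_mul_le {m n : ℕ} (hn : 2048 ≤ n)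
    (hm : 16 * n ≤ m) : 2 < #(largePrimeFactors (m + n) n) := by
  by_contra! hcard
  have hwheel := fifteen_mul_primeCounting_le (n := n) (by omega)
  have hle := le_sqrt_mul_log_add_of_pow_le (by omega) <|
    pow_le_add_pow_mul_factorial (a := π n + 2) hm (by omega) (by omega)
  push_cast at hle
  have hn' : (2048 : ℝ) ≤ n := by exact_mod_cast hn
  have hlog := log_le_sqrt_div_add (x := n) (by linarith)
  have hsqrt : (45 : ℝ) ≤ √n := Real.le_sqrt_of_sq_le (by linarith)
  have hsq : √n * √n = (n : ℝ) := Real.mul_self_sqrt n.cast_nonneg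
  have hsqrtlog : √n * Real.log n ≤ √n * (√n / 32 + 6.32) := by gcongr
  have hpi : 15 * (π n : ℝ) ≤ 4 * n + 150 := by exact_mod_cast hwheel
  have h17 : (π n + 2) * Real.log 17 ≤ (4 * n + 180) / 15 * 2.836 := by
    have := log_seventeen_lt
    gcongr
    linarith
  nlinarith

lemma mul_log_three_sub_log_two_le {n N E : ℕ} (hn : 0 < n) (hN : 0 < N)
    (h : 3 ^ n ≤ 2 ^ n * (2 * n * N ^ E)) :
    n * (Real.log 3 - Real.log 2) ≤ Real.log 2 + Real.log n + E * Real.log N := by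
  have : (0 : ℝ) < n := by exact_mod_cast hn
  have : (0 : ℝ) < N := by exact_mod_cast hN
  have h' : (3 : ℝ) ^ n ≤ 2 ^ n * (2 * n * N ^ E) := by exact_mod_cast h
  have hlog := Real.log_le_log (by positivity) h'
  rw [Real.log_mul (by positivity) (by positivity), Real.log_mul (by positivity) (by positivity),
    Real.log_mul (by positivity) (by positivity), Real.log_pow, Real.log_pow, Real.log_pow] at hlog
  linarith

lemma two_lt_card_largePrimeFactors_of_lt_sixteen_mul {m n : ℕ} (hn : 2048 ≤ n) (hnm : n ≤ m)
    (hm : m < 16 * n) : 2 < #(largePrimeFactors (m + n) n) := by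
  by_contra! hcard
  set N := m + n
  set E := π N.sqrt + #(largePrimeFactors N n)
  have hle := mul_log_three_sub_log_two_le (by omega) (by omega)
    (three_pow_le_of_two_mul_le (n := n) (N := N) (by omega) (by omega))
  have hn' : (2048 : ℝ) ≤ n := by exact_mod_cast hn
  have hlog := log_le_sqrt_div_add (x := n) (by linarith)
  have hsqrt : (45 : ℝ) ≤ √n := Real.le_sqrt_of_sq_le (by linarith)
  have hsq : √n * √n = (n : ℝ) := Real.mul_self_sqrt n.cast_nonneg
  have hN17 : (N : ℝ) ≤ 17 * n := by exact_mod_cast (show N ≤ 17 * n by omega)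
  have hlogN : Real.log N ≤ √n / 32 + 9.156 := by
    have := Real.log_le_log (by exact_mod_cast (show 0 < N by omega)) hN17
    rw [Real.log_mul (by norm_num) (by positivity)] at this
    linarith [log_seventeen_lt]
  have hsqrtN : (N.sqrt : ℝ) ≤ 4.124 * √n := by
    refine Real.nat_sqrt_le_real_sqrt.trans (Real.sqrt_le_iff.2 ⟨by positivity, ?_⟩)
    nlinarith
  have hEsqrt : 15 * (E : ℝ) ≤ 4 * N.sqrt + 180 := by
    have := fifteen_mul_primeCounting_le (n := N.sqrt) (Nat.le_sqrt.2 (by omega))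
    exact_mod_cast (show 15 * E ≤ 4 * N.sqrt + 180 by omega)
  have hElog : E * Real.log N ≤ (4 * (4.124 * √n) + 180) / 15 * (√n / 32 + 9.156) := by
    have := Real.log_natCast_nonneg N
    gcongr
    linarith
  have hratio : n * 0.4054 ≤ n * (Real.log 3 - Real.log 2) := by
    gcongr
    linarith [Real.log_three_gt_d9, Real.log_two_lt_d9]
  nlinarith [Real.log_two_lt_d9]

end LargePrimeFactors

/-- For `m ≥ n ≥ 9`, `P(m,n)` is divisible by at least three distinct primes
strictly greater than `n`. -/
theorem stmt_13 (m n : ℕ) (hmn : m ≥ n) (hn : n ≥ 9) :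
    ((P m n).primeFactors.filter (fun p => n < p)).card ≥ 3 := by
  rw [filter_primeFactors_P]
  rcases lt_or_ge n 21 with hn21 | hn21
  · rcases lt_or_ge m (10 * n) with hm | hm
    · exact two_lt_card_largePrimeFactors_of_lt_21_of_lt_ten_mul hn hn21 hmn hm
    · exact two_lt_card_largePrimeFactors_of_lt_21_of_ten_mul_le hn hn21 hm
  rcases lt_or_ge n 2048 with hn2048 | hn2048
  · rcases lt_or_ge m (4 * n) with hm | hm
    · exact two_lt_card_largePrimeFactors_of_lt_2048_of_lt_four_mul hn21 hn2048 hmn hm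
    · exact two_lt_card_largePrimeFactors_of_lt_2048_of_four_mul_le hn21 hn2048 hm
  · rcases lt_or_ge m (16 * n) with hm | hm
    · exact two_lt_card_largePrimeFactors_of_lt_sixteen_mul hn2048 hmn hm
    · exact two_lt_card_largePrimeFactors_of_sixteen_mul_le hn2048 hm
end

section
/- Let C = 1.25506, let log denote the natural logarithm, and let π(n) denote the number of primes ≤ n. For every integer n ≥ 1123, the number of primes p with n < p < 2n is at least ⌊(1/C)·(log 4 − C − (log 2 · log 4)/log(2n))·π(n)⌋. -/
/-!
The central binomial coefficient exceeds `4 ^ n / n`, while its prime factors lie either in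
`(n, 2n)` or below `2n / 3`. The latter contribute at most `(2n) ^ √(2n) * 4 ^ (2n / 3)`, and each
of the former at most `2n`, so `log (2n)` times the number of primes in `(n, 2n)` is at least
`(log 4 / 3) n - O(√n log n)`. For `C ≥ 5 / 4`, multiplying the coefficient of `π n` by `log (2n)`
gives at most `0.11 log n - log 2`. Where this is positive, Chebyshev's bound
`π n ≤ log 4 * n / log √n + √n` makes its product with `π n` at most
`(0.22 log 4) n + O(√n log n)`, and `0.22 < 1 / 3`.
-/

section CentralBinomial

open Finset

theorem prod_pow_factorization_choose_le_pow_card {m : ℕ} (hm : 0 < m) (k : ℕ) (s : Finset ℕ) :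
    ∏ p ∈ s, p ^ (m.choose k).factorization p ≤ m ^ #s :=
  prod_le_pow_card s _ m fun _ _ ↦ Nat.pow_factorization_choose_le hm

theorem prod_pow_factorization_choose_le_four_pow {m x : ℕ} (k : ℕ) {s : Finset ℕ}
    (hs : s ⊆ Nat.primesLE x) (hm : ∀ p ∈ s, m < p ^ 2) :
    ∏ p ∈ s, p ^ (m.choose k).factorization p ≤ 4 ^ x :=
  calc ∏ p ∈ s, p ^ (m.choose k).factorization p
    _ ≤ ∏ p ∈ s, p := by
      refine prod_le_prod' fun p hp ↦ ?_
      exact (Nat.pow_le_pow_right (Nat.prime_of_mem_primesLE (hs hp)).pos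
        (Nat.factorization_choose_le_one (hm p hp))).trans_eq (pow_one p)
    _ ≤ ∏ p ∈ Nat.primesLE x, p :=
      prod_le_prod_of_subset_of_one_le' hs fun p hp _ ↦ (Nat.prime_of_mem_primesLE hp).one_le
    _ = primorial x := (primorial_eq_prod_primesLE x).symm
    _ ≤ 4 ^ x := primorial_le_four_pow x

theorem le_or_mem_Ioo_of_prime_of_dvd_centralBinom {n p : ℕ} (hn : 2 < n) (hp : p.Prime)
    (hdvd : p ∣ n.centralBinom) : p ≤ 2 * n / 3 ∨ p ∈ Ioo n (2 * n) := by
  have hpos : 0 < n.centralBinom.factorization p :=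
    hp.factorization_pos_of_dvd n.centralBinom_ne_zero hdvd
  have hle : p ≤ 2 * n := Nat.le_two_mul_of_factorization_centralBinom_pos hpos
  have hne : p ≠ 2 * n := by
    rintro rfl
    exact Nat.not_prime_mul (by decide) (by lia) hp
  have hgap : p ≤ n → ¬ 2 * n < 3 * p := fun hpn hlt ↦
    hpos.ne' (Nat.factorization_centralBinom_of_two_mul_self_lt_three_mul hn hpn hlt)
  rw [mem_Ioo]
  lia

theorem centralBinom_le_mul_pow_card_primes_Ioo {n : ℕ} (hn : 2 < n) :
    n.centralBinom ≤
      (2 * n) ^ (2 * n).sqrt * (4 ^ (2 * n / 3) * (2 * n) ^ #{p ∈ Ioo n (2 * n) | p.Prime}) := by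
  have h2n : 0 < 2 * n := by lia
  set P := n.centralBinom.primeFactors
  set small := {p ∈ P | p ≤ (2 * n).sqrt}
  set rest := {p ∈ P | ¬ p ≤ (2 * n).sqrt}
  set medium := {p ∈ rest | p ≤ 2 * n / 3}
  set large := {p ∈ rest | ¬ p ≤ 2 * n / 3}
  have prime_of_mem {p : ℕ} (hp : p ∈ P) : p.Prime := Nat.prime_of_mem_primeFactors hp
  have card_small : #small ≤ (2 * n).sqrt := by
    have hsub : small ⊆ Icc 1 (2 * n).sqrt := by grind [Nat.Prime.one_le]
    simpa using card_le_card hsub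
  have medium_subset : medium ⊆ Nat.primesLE (2 * n / 3) := by grind [Nat.mem_primesLE]
  have lt_sq_of_mem_medium : ∀ p ∈ medium, 2 * n < p ^ 2 := by grind [Nat.sqrt_lt']
  have large_subset : large ⊆ {p ∈ Ioo n (2 * n) | p.Prime} := fun p hp ↦ by
    have hpP : p ∈ P := by grind
    have := le_or_mem_Ioo_of_prime_of_dvd_centralBinom hn (prime_of_mem hpP)
      (Nat.dvd_of_mem_primeFactors hpP)
    grind
  calc n.centralBinom
    _ = ∏ p ∈ P, p ^ n.centralBinom.factorization p := by
      rw [← Nat.prod_factorization_eq_prod_primeFactors,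
        Nat.prod_factorization_pow_eq_self n.centralBinom_ne_zero]
    _ = (∏ p ∈ small, p ^ n.centralBinom.factorization p) *
        ((∏ p ∈ medium, p ^ n.centralBinom.factorization p) *
          ∏ p ∈ large, p ^ n.centralBinom.factorization p) := by
      rw [prod_filter_mul_prod_filter_not, prod_filter_mul_prod_filter_not]
    _ ≤ (2 * n) ^ #small * (4 ^ (2 * n / 3) * (2 * n) ^ #large) := by
      gcongr
      · exact prod_pow_factorization_choose_le_pow_card h2n n small
      · exact prod_pow_factorization_choose_le_four_pow n medium_subset lt_sq_of_mem_medium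
      · exact prod_pow_factorization_choose_le_pow_card h2n n large
    _ ≤ _ := by gcongr

end CentralBinomial

section Logarithms

open Finset Real

theorem log_le_log_add_div_sub_one {a x : ℝ} (ha : 0 < a) (hx : 0 < x) :
    log x ≤ log a + (x / a - 1) := by
  have := log_le_sub_one_of_pos (div_pos hx ha)
  rw [log_div hx.ne' ha.ne'] at this
  linarith

theorem le_card_primes_Ioo_mul_log {n : ℕ} (hn : 4 ≤ n) :
    log 4 / 3 * n - √(2 * n) * log (2 * n) - log n ≤
      #{p ∈ Ioo n (2 * n) | p.Prime} * log (2 * n) := by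
  set K := #{p ∈ Ioo n (2 * n) | p.Prime}
  have hpow : 4 ^ n ≤ n * ((2 * n) ^ (2 * n).sqrt * (4 ^ (2 * n / 3) * (2 * n) ^ K)) := by
    grw [Nat.four_pow_lt_mul_centralBinom n hn,
      centralBinom_le_mul_pow_card_primes_Ioo (n := n) (by lia)]
  have hlog : n * log 4 ≤ log n + ((2 * n).sqrt * log (2 * n) +
      ((2 * n / 3 : ℕ) * log 4 + K * log (2 * n))) := by
    have := log_le_log (by positivity) (Nat.cast_le (α := ℝ).2 hpow)
    push_cast at this
    rwa [log_mul (by positivity) (by positivity), log_mul (by positivity) (by positivity),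
      log_mul (by positivity) (by positivity), log_pow, log_pow, log_pow, log_pow] at this
  have hsqrt : ((2 * n).sqrt : ℝ) ≤ √(2 * n) := by
    exact_mod_cast nat_sqrt_le_real_sqrt (a := 2 * n)
  have hthird : ((2 * n / 3 : ℕ) : ℝ) ≤ 2 * n / 3 := by
    exact_mod_cast Nat.cast_div_le (α := ℝ) (m := 2 * n) (n := 3)
  have hlog_nonneg : 0 ≤ log (2 * n) := by exact_mod_cast log_natCast_nonneg (2 * n)
  grw [hsqrt, hthird] at hlog
  linarith

/- The point of tangency `2 ^ 5` is close to `√(2 * x)` at `log x = log 2 / 0.11`, where the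
inequalities below are tightest. -/
theorem sixteen_mul_log_sub_le_sqrt {x : ℝ} (hx : 0 < x) :
    16 * (log x - (9 * log 2 - 2)) ≤ √(2 * x) := by
  have htangent := log_le_log_add_div_sub_one (by norm_num : (0 : ℝ) < 2 ^ 5)
    (sqrt_pos.2 (mul_pos two_pos hx))
  rw [log_sqrt (by positivity), log_mul two_ne_zero hx.ne', log_pow] at htangent
  linarith

/- `1.15 = 1.11 + 0.04`: in `mul_log_four_mul_div_add_sqrt_le` the terms of order `√x log x` add up
to `1.11 * log x * √(2 * x)`, and the remaining `log x` is at most `0.04 * log x * √(2 * x)`. -/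
theorem log_mul_sqrt_le {x : ℝ} (hx : 0 < x) (hlog : log 2 ≤ 0.11 * log x) :
    1.15 * log x * √(2 * x) ≤ x * ((2 / 3 - 0.44) * log 2 + 4 * log 2 ^ 2 / log x) := by
  have hc := log_two_gt_d9
  have hL : 6.3 ≤ log x := by linarith
  have hsq : √(2 * x) * √(2 * x) = 2 * x := mul_self_sqrt (by positivity)
  have hsqrt : 16 * (log x - 4.2384) ≤ √(2 * x) := by
    linarith [sixteen_mul_log_sub_le_sqrt hx, log_two_lt_d9]
  have hlog_sq : 1.15 * log x ^ 2 ≤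
      √(2 * x) / 2 * ((2 / 3 - 0.44) * log 2 * log x + 4 * log 2 ^ 2) :=
    calc 1.15 * log x ^ 2
      _ ≤ 16 * (log x - 4.2384) / 2 * ((2 / 3 - 0.44) * 0.693 * log x + 4 * 0.693 ^ 2) := by
        nlinarith
      _ ≤ √(2 * x) / 2 * ((2 / 3 - 0.44) * log 2 * log x + 4 * log 2 ^ 2) := by
        gcongr <;> linarith
  calc 1.15 * log x * √(2 * x)
    _ = 1.15 * log x ^ 2 * √(2 * x) / log x := by field
    _ ≤ √(2 * x) / 2 * ((2 / 3 - 0.44) * log 2 * log x + 4 * log 2 ^ 2) * √(2 * x) / log x := by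
      gcongr
    _ = √(2 * x) * √(2 * x) / 2 * ((2 / 3 - 0.44) * log 2 + 4 * log 2 ^ 2 / log x) := by field
    _ = x * ((2 / 3 - 0.44) * log 2 + 4 * log 2 ^ 2 / log x) := by rw [hsq]; ring

theorem mul_log_four_mul_div_add_sqrt_le {x : ℝ} (hx : 0 < x) (hlog : log 2 ≤ 0.11 * log x) :
    (0.11 * log x - log 2) * (log 4 * x / log √x + √x) ≤
      log 4 / 3 * x - √(2 * x) * log (2 * x) - log x := by
  have hL : 6.3 ≤ log x := by linarith [log_two_gt_d9]
  have hlog_le : log x ≤ 0.04 * log x * √(2 * x) := by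
    have : 25 ≤ √(2 * x) := by linarith [sixteen_mul_log_sub_le_sqrt hx, log_two_lt_d9]
    nlinarith
  have hsqrt_le : √x ≤ √(2 * x) := sqrt_le_sqrt (by linarith)
  rw [log_four_eq, log_sqrt hx.le, log_mul two_ne_zero hx.ne']
  calc (0.11 * log x - log 2) * (2 * log 2 * x / (log x / 2) + √x)
    _ ≤ (0.11 * log x - log 2) * (2 * log 2 * x / (log x / 2) + √(2 * x)) := by
      gcongr
    _ = 2 * log 2 / 3 * x - √(2 * x) * (log 2 + log x) + 1.11 * log x * √(2 * x) -
        x * ((2 / 3 - 0.44) * log 2 + 4 * log 2 ^ 2 / log x) := by field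
    _ ≤ 2 * log 2 / 3 * x - √(2 * x) * (log 2 + log x) - log x := by
      linarith [log_mul_sqrt_le hx hlog]

theorem mul_primeCounting_le_card_primes_Ioo_mul_log (n : ℕ) :
    (0.11 * log n - log 2) * n.primeCounting ≤
      #{p ∈ Ioo n (2 * n) | p.Prime} * log (2 * n) := by
  rcases le_or_gt (0.11 * log n) (log 2) with hsmall | hlarge
  · have hlog_nonneg : 0 ≤ log (2 * n) := by exact_mod_cast log_natCast_nonneg (2 * n)
    exact (mul_nonpos_of_nonpos_of_nonneg (by linarith) (by positivity)).trans (by positivity)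
  have hn : (4 : ℝ) < n := by linarith [log_two_gt_d9, log_le_self (x := n) (by positivity)]
  have hn' : 4 ≤ n := by exact_mod_cast hn.le
  calc (0.11 * log n - log 2) * n.primeCounting
    _ ≤ (0.11 * log n - log 2) * (log 4 * n / log √n + √n) := by
      gcongr
      simpa using Chebyshev.pi_le_log4_mul_div (x := n) (by linarith)
    _ ≤ log 4 / 3 * n - √(2 * n) * log (2 * n) - log n :=
      mul_log_four_mul_div_add_sqrt_le (by linarith) hlarge.le
    _ ≤ #{p ∈ Ioo n (2 * n) | p.Prime} * log (2 * n) := le_card_primes_Ioo_mul_log hn'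

theorem coeff_mul_log_le {C x : ℝ} (hC : 5 / 4 ≤ C) (hx : 1 ≤ x) :
    1 / C * (log 4 - C - log 2 * log 4 / log (2 * x)) * log (2 * x) ≤
      0.11 * log x - log 2 := by
  have hL : 0 ≤ log x := log_nonneg hx
  have hlog_ne : log 2 + log x ≠ 0 := by linarith [log_two_gt_d9]
  have hdiv : log 4 / C - 1 ≤ 0.11 := by
    rw [sub_le_iff_le_add, div_le_iff₀ (by linarith), log_four_eq]
    linarith [log_two_lt_d9]
  rw [log_mul two_ne_zero (by linarith)]
  calc 1 / C * (log 4 - C - log 2 * log 4 / (log 2 + log x)) * (log 2 + log x)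
    _ = (log 4 / C - 1) * log x - log 2 := by field
    _ ≤ 0.11 * log x - log 2 := by gcongr

end Logarithms

theorem stmt_15_general {C : ℝ} (hC : 5 / 4 ≤ C) (n : ℕ) :
    1 / C * (Real.log 4 - C - Real.log 2 * Real.log 4 / Real.log (2 * (n : ℝ))) *
        (Nat.primeCounting n : ℝ) ≤
      ((Finset.Ioo n (2 * n)).filter Nat.Prime).card := by
  rcases n.eq_zero_or_pos with rfl | hn
  · simp
  have hn' : (1 : ℝ) ≤ n := by exact_mod_cast hn
  have hlog : 0 < Real.log (2 * n) := Real.log_pos (by linarith)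
  refine le_of_mul_le_mul_right ?_ hlog
  rw [mul_right_comm]
  grw [coeff_mul_log_le hC hn']
  exact mul_primeCounting_le_card_primes_Ioo_mul_log n

/-- For every integer `n ≥ 1123`, the number of primes in `(n, 2n)` is at least
`⌊(1/C)·(log 4 − C − log 2 · log 4 / log(2n))·π(n)⌋`, with `C = 1.25506`. -/
theorem stmt_15 (n : ℕ) (hn : n ≥ 1123) :
    ⌊(1 / 1.25506 : ℝ) *
        (Real.log 4 - 1.25506 - Real.log 2 * Real.log 4 / Real.log (2 * (n : ℝ))) *
        (Nat.primeCounting n : ℝ)⌋ ≤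
      (((Finset.Ioo n (2 * n)).filter Nat.Prime).card : ℤ) := by
  exact_mod_cast (Int.floor_le _).trans (stmt_15_general (by norm_num) n)
end
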